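/- arXiv:0712.0513 — 2 statements merged into one kernel-verified Lean document; each statement's English description precedes it below -/
import Mathlib

section
/- Let d ≥ 1 and let (T_j)_{j∈ℤ} be a sequence of linear isomorphisms of ℝ^d. For j ∈ ℤ and n ≥ 0 write T^{(n)}_j = T_{j+n-1} ∘ ⋯ ∘ T_{j+1} ∘ T_j (with T^{(0)}_j = id). Suppose (E_j, F_j)_{j∈ℤ} and (E'_j, F'_j)_{j∈ℤ} are two sequences of linear subspaces of ℝ^d such that for all j: ℝ^d = E_j ⊕ F_j, ℝ^d = E'_j ⊕ F'_j, T_j(E_j) = E_{j+1}, T_j(F_j) = F_{j+1}, T_j(E'_j) = E'_{j+1}, T_j(F'_j) = F'_{j+1}, the dimensions dim E_j = i and dim E'_j = i' are constant in j, and there exist λ, λ' ∈ (0,1) such that for all j ∈ ℤ, all n ≥ 0, every unit vector u ∈ E_j and every unit vector v ∈ F_j one has ‖T^{(n)}_j u‖ ≤ λ^n ‖T^{(n)}_j v‖, and likewise for all unit u' ∈ E'_j and v' ∈ F'_j one has ‖T^{(n)}_j u'‖ ≤ λ'^n ‖T^{(n)}_j v'‖. If i ≤ i', then E_j ⊆ E'_j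 for every j ∈ ℤ. -/
/-!
The proof takes place at a fixed time `j` and only looks forward. If `u` lies in the dominated
subspace `E j` and `v` does not, write `v = p + q` with `p ∈ E j` and `0 ≠ q ∈ F j`. Domination
makes both `‖T^{(n)}_j u‖` and `‖T^{(n)}_j p‖` negligible compared with `‖T^{(n)}_j q‖`, so
`‖T^{(n)}_j u‖ < ‖T^{(n)}_j v‖` for all large `n` (`eventually_norm_lt_of_dominated`); no bound on
the angle between the subspaces along the orbit is involved.

Consequently two dominated subspaces at the same time are nested one way or the other: for
`u ∈ E j` outside `E' j` and `w ∈ E' j` outside `E j`, each of the two images would eventually have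
to be strictly smaller than the other. The inequality of dimensions decides the direction of the
inclusion.
-/

/-- For a sequence of linear isomorphisms `(T j)_{j ∈ ℤ}` of `ℝ^d`, the composition
`T^{(n)}_j = T_{j+n-1} ∘ ⋯ ∘ T_{j+1} ∘ T_j` applied to a vector (`n = 0` gives the
identity). -/
def cocycleApply {d : ℕ}
    (T : ℤ → (EuclideanSpace ℝ (Fin d) ≃ₗ[ℝ] EuclideanSpace ℝ (Fin d))) :
    ℕ → ℤ → EuclideanSpace ℝ (Fin d) → EuclideanSpace ℝ (Fin d)
  | 0, _, v => v
  | (n + 1), j, v => cocycleApply T n (j + 1) (T j v)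

theorem exists_linearEquiv_eq_cocycleApply {d : ℕ}
    (T : ℤ → (EuclideanSpace ℝ (Fin d) ≃ₗ[ℝ] EuclideanSpace ℝ (Fin d))) (n : ℕ) (j : ℤ) :
    ∃ B : EuclideanSpace ℝ (Fin d) ≃ₗ[ℝ] EuclideanSpace ℝ (Fin d),
      ∀ v, cocycleApply T n j v = B v := by
  induction n generalizing j with
  | zero => exact ⟨LinearEquiv.refl ℝ _, fun v => rfl⟩
  | succ n ih =>
    obtain ⟨B, hB⟩ := ih (j + 1)
    exact ⟨(T j).trans B, fun v => hB (T j v)⟩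

/-- If `P` is dominated by a complement `Q` under a sequence of isomorphisms `A n`, then every
vector of `P` eventually has smaller image than any given vector outside `P`. -/
theorem eventually_norm_lt_of_dominated {V : Type*} [NormedAddCommGroup V] [NormedSpace ℝ V]
    (A : ℕ → (V ≃ₗ[ℝ] V)) {P Q : Submodule ℝ V} (hPQ : IsCompl P Q) {r : ℝ}
    (hr0 : 0 < r) (hr1 : r < 1)
    (hdom : ∀ n : ℕ, ∀ u ∈ P, ∀ v ∈ Q, ‖u‖ = 1 → ‖v‖ = 1 → ‖A n u‖ ≤ r ^ n * ‖A n v‖)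
    {u v : V} (hu : u ∈ P) (hv : v ∉ P) : ∀ᶠ n in Filter.atTop, ‖A n u‖ < ‖A n v‖ := by
  obtain ⟨p, hp, q, hq, rfl⟩ : ∃ p ∈ P, ∃ q ∈ Q, p + q = v :=
    Submodule.mem_sup.1 (hPQ.sup_eq_top ▸ Submodule.mem_top)
  have hq0 : q ≠ 0 := by
    rintro rfl
    exact hv (by simpa using hp)
  have hqpos : 0 < ‖q‖ := norm_pos_iff.2 hq0
  have hom : ∀ n : ℕ, ∀ x ∈ P, ‖A n x‖ ≤ r ^ n * (‖x‖ / ‖q‖) * ‖A n q‖ := by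
    intro n x hx
    rcases eq_or_ne x 0 with rfl | hx0
    · simp
    have hxpos : 0 < ‖x‖ := norm_pos_iff.2 hx0
    have h := hdom n (‖x‖⁻¹ • x) (P.smul_mem _ hx) (‖q‖⁻¹ • q) (Q.smul_mem _ hq)
      (by rw [norm_smul, norm_inv, norm_norm, inv_mul_cancel₀ hxpos.ne'])
      (by rw [norm_smul, norm_inv, norm_norm, inv_mul_cancel₀ hqpos.ne'])
    rw [map_smul, map_smul, norm_smul, norm_smul, norm_inv, norm_inv, norm_norm, norm_norm,
      inv_mul_le_iff₀ hxpos] at h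
    calc ‖A n x‖ ≤ _ := h
      _ = _ := by ring
  have hlim : Filter.Tendsto (fun n : ℕ => r ^ n * (‖u‖ / ‖q‖ + ‖p‖ / ‖q‖)) Filter.atTop
      (nhds 0) := by
    simpa using (tendsto_pow_atTop_nhds_zero_of_lt_one hr0.le hr1).mul_const
      (‖u‖ / ‖q‖ + ‖p‖ / ‖q‖)
  filter_upwards [hlim.eventually_lt_const one_pos] with n hn
  have hAq : 0 < ‖A n q‖ := norm_pos_iff.2 (by simpa using hq0)
  have hsum := mul_lt_mul_of_pos_right hn hAq
  have htri : ‖A n q‖ ≤ ‖A n (p + q)‖ + ‖A n p‖ := by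
    have h := norm_sub_le (A n (p + q)) (A n p)
    rwa [← map_sub, add_sub_cancel_left] at h
  linarith [hom n u hu, hom n p hp]

/-- Lemma 4.30 of the paper (nesting of dominated splittings), stated along a single
orbit of a linear cocycle on `ℝ^d`: if `(E j, F j)` and `(E' j, F' j)` are two invariant
dominated splittings for the cocycle `(T j)`, with constant indices `i = dim (E j)` and
`i' = dim (E' j)`, and `i ≤ i'`, then `E j ⊆ E' j` for every `j`. -/
theorem dominated_splitting_nested {d : ℕ} (hd : 1 ≤ d)
    (T : ℤ → (EuclideanSpace ℝ (Fin d) ≃ₗ[ℝ] EuclideanSpace ℝ (Fin d)))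
    (E F E' F' : ℤ → Submodule ℝ (EuclideanSpace ℝ (Fin d))) (i i' : ℕ)
    (hEF : ∀ j, IsCompl (E j) (F j)) (hEF' : ∀ j, IsCompl (E' j) (F' j))
    (hTE : ∀ j, (E j).map (T j).toLinearMap = E (j + 1))
    (hTF : ∀ j, (F j).map (T j).toLinearMap = F (j + 1))
    (hTE' : ∀ j, (E' j).map (T j).toLinearMap = E' (j + 1))
    (hTF' : ∀ j, (F' j).map (T j).toLinearMap = F' (j + 1))
    (hdimE : ∀ j, Module.finrank ℝ (E j) = i)
    (hdimE' : ∀ j, Module.finrank ℝ (E' j) = i')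
    (lam lam' : ℝ) (hlam0 : 0 < lam) (hlam1 : lam < 1)
    (hlam0' : 0 < lam') (hlam1' : lam' < 1)
    (hdom : ∀ j : ℤ, ∀ n : ℕ, ∀ u ∈ E j, ∀ v ∈ F j, ‖u‖ = 1 → ‖v‖ = 1 →
      ‖cocycleApply T n j u‖ ≤ lam ^ n * ‖cocycleApply T n j v‖)
    (hdom' : ∀ j : ℤ, ∀ n : ℕ, ∀ u ∈ E' j, ∀ v ∈ F' j, ‖u‖ = 1 → ‖v‖ = 1 →
      ‖cocycleApply T n j u‖ ≤ lam' ^ n * ‖cocycleApply T n j v‖)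
    (hii' : i ≤ i') :
    ∀ j : ℤ, E j ≤ E' j := by
  intro j
  choose A hA using fun n => exists_linearEquiv_eq_cocycleApply T n j
  by_contra hnot
  obtain ⟨u, hu, hu'⟩ := SetLike.not_le_iff_exists.1 hnot
  have hle : E' j ≤ E j := by
    intro w hw'
    by_contra hw
    have h1 := eventually_norm_lt_of_dominated A (hEF j) hlam0 hlam1
      (fun n => by simpa only [hA] using hdom j n) hu hw
    have h2 := eventually_norm_lt_of_dominated A (hEF' j) hlam0' hlam1'
      (fun n => by simpa only [hA] using hdom' j n) hw' hu'
    obtain ⟨n, hn1, hn2⟩ := (h1.and h2).exists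
    exact lt_asymm hn1 hn2
  have heq : E' j = E j :=
    Submodule.eq_of_le_of_finrank_le hle (by rw [hdimE, hdimE']; exact hii')
  exact hnot heq.ge
end

section
/- Let X be a compact metric space and f : X → X a continuous map. Let (p_n)_{n∈ℕ} be periodic points of f, with orbits O_n = {f^j(p_n) : j ∈ ℕ} (each O_n is a finite set with f(O_n) = O_n). Suppose the sets O_n converge in the Hausdorff metric to a nonempty compact set Λ ⊆ X. Then f(Λ) = Λ and Λ is chain transitive: for all x, y ∈ Λ and all δ > 0 there is a δ-pseudo-orbit from x to y all of whose points lie in Λ. -/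
/-!
If a periodic orbit `O` is `ε`-close to `Λ` in the Hausdorff metric, and `f` moves `ε`-close points
to `η`-close points, then a point of `Λ` is shadowed by a point of `O`, one may move along `O`
(forwards by continuity, or backwards by periodicity), and then return to `Λ`, with total error at
most `ε + η`. Moving one step shows that `f '' Λ` and `Λ` have the same closure, so they agree by
compactness. For chain transitivity, follow `O` from a point near `x` to a point near `y`, which is
possible because the orbit is a single cycle, and replace each orbit point by a nearby point of `Λ`.
-/

open Filter

/-- There is a `δ`-pseudo-orbit from `x` to `y` for `f` all of whose points lie in `K`. -/
def IsPseudoOrbitInFromTo {X : Type*} [MetricSpace X] (f : X → X) (K : Set X) (δ : ℝ)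
    (x y : X) : Prop :=
  ∃ (n : ℕ) (c : ℕ → X), 1 ≤ n ∧ c 0 = x ∧ c n = y ∧ (∀ i ≤ n, c i ∈ K) ∧
    ∀ i < n, dist (f (c i)) (c (i + 1)) < δ

/-- The form in which Hausdorff convergence is used: `Λ` is approximated, in both directions and to
any precision, by a single periodic orbit. -/
theorem exists_periodic_orbit_close {X : Type*} [MetricSpace X]
    [CompactSpace X] (f : X → X) (p : ℕ → X) (k : ℕ → ℕ)
    (hk : ∀ n, 1 ≤ k n) (hper : ∀ n, f^[k n] (p n) = p n)
    (Λ : Set X) (hΛne : Λ.Nonempty)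
    (hconv : Tendsto
      (fun n => Metric.hausdorffDist (Set.range fun j : ℕ => f^[j] (p n)) Λ)
      atTop (nhds 0)) (ε : ℝ) (hε : 0 < ε) :
    ∃ (q : X) (m : ℕ), 1 ≤ m ∧ Function.IsPeriodicPt f m q ∧
      (∀ j, ∃ z ∈ Λ, dist (f^[j] q) z < ε) ∧ ∀ z ∈ Λ, ∃ j, dist (f^[j] q) z < ε := by
  obtain ⟨n, hn⟩ := (hconv.eventually (gt_mem_nhds hε)).exists
  -- Excludes the junk value `0` that `hausdorffDist` takes at infinite extended distance.
  have hfin : Metric.hausdorffEDist (Set.range fun j : ℕ => f^[j] (p n)) Λ ≠ ⊤ :=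
    Metric.hausdorffEDist_ne_top_of_nonempty_of_bounded (Set.range_nonempty _) hΛne
      (Metric.isBounded_of_compactSpace) (Metric.isBounded_of_compactSpace)
  refine ⟨p n, k n, hk n, hper n, fun j => ?_, fun z hz => ?_⟩
  · exact Metric.exists_dist_lt_of_hausdorffDist_lt (Set.mem_range_self j) hn hfin
  · obtain ⟨_, ⟨j, rfl⟩, hj⟩ := Metric.exists_dist_lt_of_hausdorffDist_lt' hz hn hfin
    exact ⟨j, hj⟩

/-- The Hausdorff limit of a sequence of periodic orbits of a continuous map of a compact
metric space is invariant and chain transitive (used in the proof of Lemma 4.2 of the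
paper). Here `p n` is a periodic point of period `k n ≥ 1` and `O n` is its orbit. -/
theorem hausdorff_limit_of_periodic_orbits_chain_transitive {X : Type*} [MetricSpace X]
    [CompactSpace X] (f : X → X) (hf : Continuous f) (p : ℕ → X) (k : ℕ → ℕ)
    (hk : ∀ n, 1 ≤ k n) (hper : ∀ n, f^[k n] (p n) = p n)
    (Λ : Set X) (hΛne : Λ.Nonempty) (hΛcpt : IsCompact Λ)
    (hconv : Tendsto
      (fun n => Metric.hausdorffDist (Set.range fun j : ℕ => f^[j] (p n)) Λ)
      atTop (nhds 0)) :
    f '' Λ = Λ ∧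
      ∀ x ∈ Λ, ∀ y ∈ Λ, ∀ δ : ℝ, 0 < δ → IsPseudoOrbitInFromTo f Λ δ x y := by
  have happ := exists_periodic_orbit_close f p k hk hper Λ hΛne hconv
  -- A common precision `ε ≤ η`, so that one application of `f` costs at most `η`.
  have huc : ∀ η > 0, ∃ ε > 0, ε ≤ η ∧ ∀ a b : X, dist a b < ε → dist (f a) (f b) < η := by
    intro η hη
    obtain ⟨ε, hε, h⟩ := Metric.uniformContinuous_iff.1
      (CompactSpace.uniformContinuous_of_continuous hf) η hη
    exact ⟨min ε η, lt_min hε hη, min_le_right _ _,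
      fun a b hab => h (hab.trans_le (min_le_left _ _))⟩
  refine ⟨Set.Subset.antisymm ?_ ?_, ?_⟩
  · rintro _ ⟨x, hx, rfl⟩
    rw [← hΛcpt.isClosed.closure_eq, Metric.mem_closure_iff]
    intro δ hδ
    obtain ⟨ε, hε, hεδ, hfε⟩ := huc (δ / 2) (half_pos hδ)
    obtain ⟨q, m, -, -, hO, hΛ⟩ := happ ε hε
    obtain ⟨j, hj⟩ := hΛ x hx
    obtain ⟨z, hz, hjz⟩ := hO (j + 1)
    have h1 := hfε _ _ hj
    rw [← Function.iterate_succ_apply' f j q] at h1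
    refine ⟨z, hz, ?_⟩
    linarith [dist_triangle_left (f x) z (f^[j + 1] q)]
  · intro y hy
    rw [← (hΛcpt.image hf).isClosed.closure_eq, Metric.mem_closure_iff]
    intro δ hδ
    obtain ⟨ε, hε, hεδ, hfε⟩ := huc (δ / 2) (half_pos hδ)
    obtain ⟨q, m, hm, hq, hO, hΛ⟩ := happ ε hε
    obtain ⟨j, hj⟩ := hΛ y hy
    -- `f^[j + (m - 1)] q` is the predecessor of `f^[j] q` on the cycle.
    obtain ⟨z, hz, hjz⟩ := hO (j + (m - 1))
    have h1 := hfε _ _ hjz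
    rw [← Function.iterate_succ_apply' f, show (j + (m - 1)).succ = j + m by omega,
      Function.iterate_add_apply, hq.eq] at h1
    refine ⟨f z, ⟨z, hz, rfl⟩, ?_⟩
    linarith [dist_triangle_left y (f z) (f^[j] q)]
  · intro x hx y hy δ hδ
    obtain ⟨ε, hε, hεδ, hfε⟩ := huc (δ / 2) (half_pos hδ)
    obtain ⟨q, m, hm, hq, hO, hΛ⟩ := happ ε hε
    obtain ⟨a, ha⟩ := hΛ x hx
    -- Going around the cycle often enough, the orbit passes near `y` strictly after time `a`.
    obtain ⟨n, hn, hb⟩ : ∃ n, 1 ≤ n ∧ dist (f^[a + n] q) y < ε := by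
      obtain ⟨b, hb⟩ := hΛ y hy
      have hle : a + 1 ≤ (a + 1) * m := Nat.le_mul_of_pos_right _ hm
      refine ⟨b + (a + 1) * m - a, by omega, ?_⟩
      rw [show a + (b + (a + 1) * m - a) = b + (a + 1) * m by omega,
        Function.iterate_add_apply, (hq.const_mul (a + 1)).eq]
      exact hb
    choose z hz hjz using hO
    let c : ℕ → X := fun i => if i = 0 then x else if i = n then y else z (a + i)
    have hc : ∀ i, c i ∈ Λ ∧ dist (f^[a + i] q) (c i) < ε := by
      intro i
      by_cases h0 : i = 0
      · subst h0
        simpa [c] using And.intro hx ha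
      · by_cases h1 : i = n
        · subst h1
          simpa [c, h0] using And.intro hy hb
        · simpa [c, h0, h1] using And.intro (hz (a + i)) (hjz (a + i))
    refine ⟨n, c, hn, by simp [c], ?_, fun i _ => (hc i).1, fun i _ => ?_⟩
    · simp [c, show n ≠ 0 by omega]
    · have h1 := hfε _ _ (hc i).2
      rw [← Function.iterate_succ_apply' f] at h1
      have h2 := (hc (i + 1)).2
      rw [← add_assoc] at h2
      linarith [dist_triangle_left (f (c i)) (c (i + 1)) (f^[a + i + 1] q)]
end
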